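/- Let J be a simple ambidextrous object of C and let U, V be simple objects with S'(J,U) ≠ 0 and S'(J,V) ≠ 0 (i.e. U, V ∈ A(J)). Then S'(U,J)·S'(J,V)·dim(V) = S'(V,J)·S'(J,U)·dim(U) in K; equivalently, the modified dimension d_J(V) = d_0·S'(V,J)/S'(J,V) is proportional to the categorical dimension dim(V) on A(J). -/

import Mathlib

open CategoryTheory MonoidalCategory

namespace RibbonPaper

/-- A twist (balancing/ribbon structure) on a braided category with right duals:
a natural family of isomorphisms `θ V : V ⟶ V` satisfying
`θ (V ⊗ W) = c_{W,V} ∘ c_{V,W} ∘ (θ V ⊗ θ W)` and `θ (Vᘁ) = (θ V)ᘁ`. -/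
structure Twist (C : Type*) [Category C] [MonoidalCategory C] [BraidedCategory C]
    [RightRigidCategory C] where
  θ : ∀ V : C, V ⟶ V
  isIso : ∀ V : C, IsIso (θ V)
  natural : ∀ {V W : C} (f : V ⟶ W), f ≫ θ W = θ V ≫ f
  tensor : ∀ V W : C, θ (V ⊗ W) = (θ V ⊗ₘ θ W) ≫ (β_ V W).hom ≫ (β_ W V).hom
  dual : ∀ V : C, θ (Vᘁ) = (θ V)ᘁ

variable {C : Type*} [Category C] [MonoidalCategory C] [BraidedCategory C]
  [Preadditive C] [MonoidalPreadditive C] [RightRigidCategory C]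

variable (T : Twist C)

/-- The modified evaluation `d'_V := d_V ∘ c_{V,V*} ∘ (θ_V ⊗ id_{V*})`. -/
def dP (V : C) : V ⊗ Vᘁ ⟶ 𝟙_ C :=
  (T.θ V ⊗ₘ 𝟙 (Vᘁ)) ≫ (β_ V (Vᘁ)).hom ≫ ε_ V (Vᘁ)

/-- The modified coevaluation `b'_V := (id_{V*} ⊗ θ_V) ∘ c_{V,V*} ∘ b_V`. -/
def bP (V : C) : 𝟙_ C ⟶ Vᘁ ⊗ V :=
  η_ V (Vᘁ) ≫ (β_ V (Vᘁ)).hom ≫ (𝟙 (Vᘁ) ⊗ₘ T.θ V)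

/-- The partial right trace `⟨f⟩_R`-endomorphism:
`(id_U ⊗ d'_V) ∘ (f ⊗ id_{V*}) ∘ (id_U ⊗ b_V) : U ⟶ U`. -/
def ptrR {U V : C} (f : U ⊗ V ⟶ U ⊗ V) : U ⟶ U :=
  (ρ_ U).inv ≫ (U ◁ η_ V (Vᘁ)) ≫ (α_ U V (Vᘁ)).inv ≫ (f ▷ (Vᘁ)) ≫
    (α_ U V (Vᘁ)).hom ≫ (U ◁ dP T V) ≫ (ρ_ U).hom

/-- The partial left trace `⟨f⟩_L`-endomorphism:
`(d_U ⊗ id_V) ∘ (id_{U*} ⊗ f) ∘ (b'_U ⊗ id_V) : V ⟶ V`. -/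
def ptrL {U V : C} (f : U ⊗ V ⟶ U ⊗ V) : V ⟶ V :=
  (λ_ V).inv ≫ (bP T U ▷ V) ≫ (α_ (Uᘁ) U V).hom ≫ ((Uᘁ) ◁ f) ≫
    (α_ (Uᘁ) U V).inv ≫ (ε_ U (Uᘁ) ▷ V) ≫ (λ_ V).hom

/-- An object `V` is ambidextrous if `tr_L f = tr_R f` for all `f : V ⊗ V ⟶ V ⊗ V`. -/
def Ambidextrous (V : C) : Prop := ∀ f : V ⊗ V ⟶ V ⊗ V, ptrL T f = ptrR T f

/-- The categorical trace `tr_C(f) := d'_V ∘ (f ⊗ id_{V*}) ∘ b_V ∈ K = End(𝟙)`. -/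
def trC {V : C} (f : V ⟶ V) : 𝟙_ C ⟶ 𝟙_ C :=
  η_ V (Vᘁ) ≫ (f ▷ (Vᘁ)) ≫ dP T V

/-- The categorical (quantum) dimension `dim V := tr_C(id_V)`. -/
def qdim (V : C) : 𝟙_ C ⟶ 𝟙_ C := trC T (𝟙 V)

/-- The action of `K = End(𝟙)` on Hom-groups: `k • f := k ⊗ f` (up to unitors). -/
def smul {V W : C} (k : 𝟙_ C ⟶ 𝟙_ C) (f : V ⟶ W) : V ⟶ W :=
  (λ_ V).inv ≫ (k ⊗ₘ f) ≫ (λ_ W).hom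

/-- `V` is simple if `End(V) = K ⋅ id_V`. -/
def IsSimple (V : C) : Prop := ∀ f : V ⟶ V, ∃ k : 𝟙_ C ⟶ 𝟙_ C, f = smul k (𝟙 V)

/-- The endomorphism of `Y` computing `S'(X,Y)`:
`(id_Y ⊗ d'_X) ∘ ((c_{X,Y} ∘ c_{Y,X}) ⊗ id_{X*}) ∘ (id_Y ⊗ b_X)`. -/
def SMap (X Y : C) : Y ⟶ Y := ptrR T ((β_ Y X).hom ≫ (β_ X Y).hom)

/-- `V ∈ A(J)`: `V` is simple and `S'(J,V) ≠ 0`. -/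
def InA (J V : C) : Prop :=
  IsSimple V ∧ ∃ s : 𝟙_ C ⟶ 𝟙_ C, SMap T J V = smul s (𝟙 V) ∧ s ≠ 0

/-- Endomorphisms of the unit object commute. -/
lemma unit_comp_comm {C : Type*} [Category C] [MonoidalCategory C]
    (a b : 𝟙_ C ⟶ 𝟙_ C) : a ≫ b = b ≫ a := by
  have h := whisker_exchange a b
  simp only [id_whiskerLeft, whiskerRight_id, unitors_equal, unitors_inv_equal,
    Category.assoc, Iso.inv_hom_id_assoc, Iso.cancel_iso_hom_left] at h
  simpa only [← Category.assoc, Iso.cancel_iso_inv_right] using h.symm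

section Braiding

open BraidedCategory

variable {C : Type*} [Category C] [MonoidalCategory C] [BraidedCategory C]

/-- A strand crossing one leg of a cup is pulled to the other side of the cup. -/
lemma cup_braiding_right (Y : C) {A B : C} (g : 𝟙_ C ⟶ A ⊗ B) :
    Y ◁ g ≫ (α_ Y A B).inv ≫ (β_ Y A).hom ▷ B =
      (ρ_ Y).hom ≫ (λ_ Y).inv ≫ g ▷ Y ≫ (α_ A B Y).hom ≫ A ◁ (β_ Y B).inv ≫
        (α_ A Y B).inv := by
  have h := braiding_naturality_right Y g
  rw [braiding_tensor_right_hom, braiding_tensorUnit_right, Category.assoc] at h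
  rw [← reassoc_of% h]
  simp

/-- A cup moved across a strand passing behind it. -/
lemma cup_braiding_left (Y : C) {A B : C} (g : 𝟙_ C ⟶ A ⊗ B) :
    g ▷ Y ≫ (α_ A B Y).hom ≫ A ◁ (β_ B Y).hom ≫ (α_ A Y B).inv ≫ (β_ A Y).hom ▷ B =
      (λ_ Y).hom ≫ (ρ_ Y).inv ≫ Y ◁ g ≫ (α_ Y A B).inv := by
  have h := braiding_naturality_left g Y
  rw [braiding_tensor_left_hom, braiding_tensorUnit_left, Category.assoc] at h
  rw [← reassoc_of% h]
  simp

/-- A strand crossing one leg of a cap is pulled to the other side of the cap. -/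
lemma braiding_cap_left (Y : C) {A B : C} (g : A ⊗ B ⟶ 𝟙_ C) :
    (β_ A Y).hom ▷ B ≫ (α_ Y A B).hom ≫ Y ◁ g =
      (α_ A Y B).hom ≫ A ◁ (β_ B Y).inv ≫ (α_ A B Y).inv ≫ g ▷ Y ≫
        (λ_ Y).hom ≫ (ρ_ Y).inv := by
  have h := braiding_naturality_left g Y
  rw [braiding_tensor_left_hom, braiding_tensorUnit_left] at h
  rw [h]
  simp

lemma cup_whiskerRight (Z : C) {A B : C} (g : 𝟙_ C ⟶ A ⊗ B) :
    g ▷ Z = (λ_ Z).hom ≫ (ρ_ Z).inv ≫ Z ◁ g ≫ (β_ Z (A ⊗ B)).hom := by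
  rw [braiding_naturality_right]
  simp

lemma cap_whiskerRight (Z : C) {A B : C} (g : A ⊗ B ⟶ 𝟙_ C) :
    g ▷ Z = (β_ Z (A ⊗ B)).inv ≫ Z ◁ g ≫ (ρ_ Z).hom ≫ (λ_ Z).inv := by
  rw [← braiding_inv_naturality_left_assoc]
  simp

end Braiding

lemma comp_ptrR {W X Y : C} (g : W ⟶ X) (f : X ⊗ Y ⟶ X ⊗ Y) :
    g ≫ ptrR T f =
      𝟙 _ ⊗≫ W ◁ η_ Y (Yᘁ) ⊗≫ (g ▷ Y ≫ f) ▷ (Yᘁ) ⊗≫ X ◁ dP T Y ⊗≫ 𝟙 _ := by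
  unfold ptrR
  calc
    _ = 𝟙 _ ⊗≫ (g ▷ 𝟙_ C ≫ X ◁ η_ Y (Yᘁ)) ⊗≫ f ▷ (Yᘁ) ⊗≫ X ◁ dP T Y ⊗≫ 𝟙 _ := by
      monoidal
    _ = _ := by
      rw [← whisker_exchange]
      monoidal

lemma comp_ptrR_congr {W X Y : C} (g : W ⟶ X) {f k : X ⊗ Y ⟶ X ⊗ Y}
    (h : g ▷ Y ≫ f = g ▷ Y ≫ k) : g ≫ ptrR T f = g ≫ ptrR T k := by
  rw [comp_ptrR, comp_ptrR, h]

lemma whiskerLeft_ptrR (X : C) {Z Y : C} (f : Z ⊗ Y ⟶ Z ⊗ Y) :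
    X ◁ ptrR T f = ptrR T ((α_ X Z Y).hom ≫ X ◁ f ≫ (α_ X Z Y).inv) := by
  unfold ptrR
  monoidal

lemma ptrR_whiskerRight {X Y : C} (f : X ⊗ Y ⟶ X ⊗ Y) (Z : C) :
    ptrR T f ▷ Z = ptrR T ((α_ X Z Y).hom ≫ X ◁ (β_ Z Y).hom ≫ (α_ X Y Z).inv ≫ f ▷ Z ≫
      (α_ X Y Z).hom ≫ X ◁ (β_ Z Y).inv ≫ (α_ X Z Y).inv) := by
  calc
    _ = 𝟙 _ ⊗≫ X ◁ (η_ Y (Yᘁ) ▷ Z) ⊗≫ f ▷ (Yᘁ ⊗ Z) ⊗≫ X ◁ (dP T Y ▷ Z) ⊗≫ 𝟙 _ := by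
      unfold ptrR; monoidal
    _ = 𝟙 _ ⊗≫ X ◁ Z ◁ η_ Y (Yᘁ) ⊗≫ X ◁ (β_ Z Y).hom ▷ (Yᘁ) ⊗≫
          ((X ⊗ Y) ◁ (β_ Z (Yᘁ)).hom ≫ f ▷ (Yᘁ ⊗ Z) ≫ (X ⊗ Y) ◁ (β_ Z (Yᘁ)).inv) ⊗≫
          X ◁ (β_ Z Y).inv ▷ (Yᘁ) ⊗≫ X ◁ Z ◁ dP T Y ⊗≫ 𝟙 _ := by
      rw [cup_whiskerRight, cap_whiskerRight, BraidedCategory.braiding_tensor_right_hom,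
        BraidedCategory.braiding_tensor_right_inv]
      monoidal
    _ = 𝟙 _ ⊗≫ X ◁ Z ◁ η_ Y (Yᘁ) ⊗≫ X ◁ (β_ Z Y).hom ▷ (Yᘁ) ⊗≫ f ▷ (Z ⊗ Yᘁ) ⊗≫
          X ◁ (β_ Z Y).inv ▷ (Yᘁ) ⊗≫ X ◁ Z ◁ dP T Y ⊗≫ 𝟙 _ := by
      rw [whisker_exchange_assoc, ← whiskerLeft_comp, Iso.hom_inv_id, whiskerLeft_id,
        Category.comp_id]
    _ = _ := by
      unfold ptrR; monoidal

/-- The closed `X`-strand in `SMap T X Y` is pulled to the left of `Y`. -/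
lemma SMap_eq (X Y : C) :
    SMap T X Y = (λ_ Y).inv ≫ η_ X (Xᘁ) ▷ Y ≫ (α_ X (Xᘁ) Y).hom ≫
      X ◁ ((β_ Y (Xᘁ)).inv ≫ (β_ (Xᘁ) Y).inv) ≫ (α_ X (Xᘁ) Y).inv ≫
        dP T X ▷ Y ≫ (λ_ Y).hom := by
  have h₁ := cup_braiding_right Y (η_ X (Xᘁ))
  have h₂ := braiding_cap_left Y (dP T X)
  simp only [SMap, ptrR, comp_whiskerRight, Category.assoc]
  rw [reassoc_of% h₁, reassoc_of% h₂]
  simp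

/-- A `Y`-loop around the `X`-leg of the coevaluation slides to a loop around its `Xᘁ`-leg. -/
lemma coevaluation_comp_SMap_whiskerRight (X Y : C) :
    η_ X (Xᘁ) ≫ SMap T Y X ▷ (Xᘁ) =
      η_ X (Xᘁ) ≫ X ◁ ptrR T ((β_ Y (Xᘁ)).inv ≫ (β_ (Xᘁ) Y).inv) := by
  rw [SMap, whiskerLeft_ptrR, ptrR_whiskerRight]
  have h₁ := cup_braiding_left Y (η_ X (Xᘁ))
  have h₂ := cup_braiding_right Y (η_ X (Xᘁ))
  apply comp_ptrR_congr
  simp only [comp_whiskerRight, Category.assoc]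
  rw [reassoc_of% h₁, reassoc_of% h₂]
  simp

/-- Symmetry of the Hopf link invariant. -/
lemma trC_SMap_comm (X Y : C) : trC T (SMap T X Y) = trC T (SMap T Y X) := by
  have h := coevaluation_comp_SMap_whiskerRight T X Y
  unfold trC
  rw [reassoc_of% h, SMap_eq]
  unfold ptrR
  generalize (β_ Y (Xᘁ)).inv ≫ (β_ (Xᘁ) Y).inv = m
  calc
    _ = 𝟙 _ ⊗≫ (𝟙_ C ◁ η_ Y (Yᘁ) ≫ η_ X (Xᘁ) ▷ (Y ⊗ Yᘁ)) ⊗≫ X ◁ m ▷ (Yᘁ) ⊗≫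
          (dP T X ▷ (Y ⊗ Yᘁ) ≫ 𝟙_ C ◁ dP T Y) ⊗≫ 𝟙 _ := by monoidal
    _ = _ := by
      rw [whisker_exchange (η_ X (Xᘁ)) (η_ Y (Yᘁ)), ← whisker_exchange (dP T X) (dP T Y)]
      monoidal

lemma trC_smul_id (k : 𝟙_ C ⟶ 𝟙_ C) (V : C) :
    trC T (smul k (𝟙 V)) = k ≫ qdim T V := by
  unfold qdim trC smul
  rw [tensorHom_id, id_whiskerRight, Category.id_comp]
  calc
    _ = 𝟙 _ ⊗≫ (𝟙_ C ◁ η_ V (Vᘁ) ≫ k ▷ (V ⊗ Vᘁ)) ⊗≫ dP T V := by monoidal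
    _ = _ := by
      rw [whisker_exchange]
      monoidal

/-- For a simple ambidextrous `J` and simple `U, V ∈ A(J)` (i.e.
`S'(J,U) ≠ 0 ≠ S'(J,V)`), one has
`S'(U,J)·S'(J,V)·dim(V) = S'(V,J)·S'(J,U)·dim(U)` in `K`; i.e. the modified
dimension `d_J = d₀·S'(-,J)/S'(J,-)` is proportional to `dim` on `A(J)`. -/
theorem statement8
    (hK : ∀ a b : 𝟙_ C ⟶ 𝟙_ C, a ≫ b = 0 → a = 0 ∨ b = 0)
    (J U V : C) (hJ : IsSimple J) (hamb : Ambidextrous T J)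
    (hU : IsSimple U) (hV : IsSimple V)
    (sJU sJV sUJ sVJ : 𝟙_ C ⟶ 𝟙_ C)
    (hsJU : SMap T J U = smul sJU (𝟙 U)) (hJU : sJU ≠ 0)
    (hsJV : SMap T J V = smul sJV (𝟙 V)) (hJV : sJV ≠ 0)
    (hsUJ : SMap T U J = smul sUJ (𝟙 J))
    (hsVJ : SMap T V J = smul sVJ (𝟙 J)) :
    sUJ ≫ sJV ≫ qdim T V = sVJ ≫ sJU ≫ qdim T U := by
  have h₁ : sJV ≫ qdim T V = sVJ ≫ qdim T J := by
    rw [← trC_smul_id, ← trC_smul_id, ← hsJV, ← hsVJ, trC_SMap_comm]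
  have h₂ : sJU ≫ qdim T U = sUJ ≫ qdim T J := by
    rw [← trC_smul_id, ← trC_smul_id, ← hsJU, ← hsUJ, trC_SMap_comm]
  rw [h₁, h₂, ← Category.assoc, ← Category.assoc, unit_comp_comm sUJ sVJ]

end RibbonPaper
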